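/- Let s and e be composable labelled transition systems with s eco e, and let X_s ⊆ Q_s, X_e ⊆ Q_e. Then (X_s, X_e) ∈ R_U(s,e) if and only if there exists σ ∈ Utraces(s ∥ e) with ⟨s ∥ e after σ⟩ = (X_s, X_e). -/

import Mathlib

/-- Labels extended with the quiescence label `δ`. -/
inductive ELabel (Lab : Type) : Type
  | lab : Lab → ELabel Lab
  | delta : ELabel Lab

namespace ELabel

/-- Membership of an extended label in `𝓛^δ = 𝓛 ∪ {δ}`. -/
def inL {Lab : Type} (Ls : Set Lab) : ELabel Lab → Prop
  | lab ℓ => ℓ ∈ Ls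
  | delta => True

end ELabel

/-- A trace lies in `(𝓛^δ)*`. -/
def TraceIn {Lab : Type} (Ls : Set Lab) (σ : List (ELabel Lab)) : Prop :=
  ∀ x ∈ σ, ELabel.inL Ls x

/-- A labelled transition system.  `T q none q'` is an internal `τ`-step,
`T q (some ℓ) q'` is a step labelled `ℓ`. -/
structure LTS (Q : Type) (Lab : Type) where
  I : Set Lab
  U : Set Lab
  T : Q → Option Lab → Q → Prop
  q0 : Q

namespace LTS

variable {Q Lab : Type}

/-- The label set `L = I ∪ U`. -/
def L (M : LTS Q Lab) : Set Lab := M.I ∪ M.U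

/-- Standing assumptions on all LTSs: countable, disjoint input/output label
sets, transitions labelled within `L`, strong convergence (no infinite
`τ`-sequences), and image-finiteness. -/
def WellFormed (M : LTS Q Lab) : Prop :=
  M.I.Countable ∧ M.U.Countable ∧ Disjoint M.I M.U ∧
  (∀ q ℓ q', M.T q (some ℓ) q' → ℓ ∈ M.L) ∧
  (¬ ∃ f : ℕ → Q, ∀ n, M.T (f n) none (f (n + 1))) ∧
  (∀ q a, {q' | M.T q a q'}.Finite)

/-- A state is quiescent if neither an output nor `τ` is enabled in it. -/
def Quiescent (M : LTS Q Lab) (q : Q) : Prop :=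
  (∀ x ∈ M.U, ∀ q', ¬ M.T q (some x) q') ∧ ∀ q', ¬ M.T q none q'

/-- A single visible step `q --x--> q'` for `x ∈ L^δ`, where the quiescence
label `δ` gives a self-loop at quiescent states. -/
def VStep (M : LTS Q Lab) (q : Q) : ELabel Lab → Q → Prop
  | .lab ℓ, q' => M.T q (some ℓ) q'
  | .delta, q' => q' = q ∧ M.Quiescent q

/-- Zero or more `τ`-steps: `q ==ε==> q'`. -/
def Eps (M : LTS Q Lab) : Q → Q → Prop :=
  Relation.ReflTransGen fun a b => M.T a none b

/-- Weak transition `q ==σ==> q'` for `σ ∈ (L^δ)*`. -/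
inductive W (M : LTS Q Lab) : Q → List (ELabel Lab) → Q → Prop
  | nil {q q' : Q} : M.Eps q q' → W M q [] q'
  | snoc {q q1 q2 q' : Q} {σ : List (ELabel Lab)} {x : ELabel Lab} :
      W M q σ q1 → M.VStep q1 x q2 → M.Eps q2 q' → W M q (σ ++ [x]) q'

/-- `X after σ`, for a set of states `X`. -/
def afterSet (M : LTS Q Lab) (X : Set Q) (σ : List (ELabel Lab)) : Set Q :=
  {q' | ∃ q ∈ X, M.W q σ q'}

/-- `M after σ`, from the initial state. -/
def after (M : LTS Q Lab) (σ : List (ELabel Lab)) : Set Q :=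
  {q' | M.W M.q0 σ q'}

/-- The predicate underlying `out(q) ⊆ U ∪ {δ}`. -/
def outLabel (M : LTS Q Lab) (q : Q) : ELabel Lab → Prop
  | .lab ℓ => ℓ ∈ M.U ∧ ∃ q', M.T q (some ℓ) q'
  | .delta => M.Quiescent q

/-- `out(q)`. -/
def outq (M : LTS Q Lab) (q : Q) : Set (ELabel Lab) :=
  {x | M.outLabel q x}

/-- `in(q) = {ℓ ∈ I | q ==ℓ==>}`. -/
def inq (M : LTS Q Lab) (q : Q) : Set Lab :=
  {ℓ | ℓ ∈ M.I ∧ ∃ q', M.W q [ELabel.lab ℓ] q'}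

/-- `out(X) = ⋃_{q ∈ X} out(q)`. -/
def outSet (M : LTS Q Lab) (X : Set Q) : Set (ELabel Lab) :=
  ⋃ q ∈ X, M.outq q

/-- `in(X) = ⋂_{q ∈ X} in(q)`. -/
def inSet (M : LTS Q Lab) (X : Set Q) : Set Lab :=
  ⋂ q ∈ X, M.inq q

/-- Input-enabledness: `M` is an IOTS. -/
def InputEnabled (M : LTS Q Lab) : Prop :=
  ∀ q, ∀ ℓ ∈ M.I, ∃ q', M.W q [ELabel.lab ℓ] q'

/-- `Utraces(M)`. -/
def Utraces (M : LTS Q Lab) : Set (List (ELabel Lab)) :=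
  {σ | TraceIn M.L σ ∧ (∃ q', M.W M.q0 σ q') ∧
    ∀ σ1 ℓ σ2, σ = σ1 ++ ELabel.lab ℓ :: σ2 → ℓ ∈ M.I →
      ∀ q, M.W M.q0 σ1 q → ∃ q', M.W q [ELabel.lab ℓ] q'}

/-- An LTS is utrace-closed when every trace over `(L^δ)*` that it can
perform is a utrace. -/
def UtraceClosed (M : LTS Q Lab) : Prop :=
  ∀ σ : List (ELabel Lab), TraceIn M.L σ → (∃ q', M.W M.q0 σ q') → σ ∈ M.Utraces

end LTS

/-- `i uioco s`. -/
def Uioco {Qi Qs Lab : Type} (i : LTS Qi Lab) (s : LTS Qs Lab) : Prop :=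
  ∀ σ ∈ s.Utraces, i.outSet (i.after σ) ⊆ s.outSet (s.after σ)

/-- Composability: disjoint output label sets. -/
def Composable {Qs Qe Lab : Type} (s : LTS Qs Lab) (e : LTS Qe Lab) : Prop :=
  s.U ∩ e.U = ∅

/-- Parallel composition `s ∥ e`. -/
def par {Qs Qe Lab : Type} (s : LTS Qs Lab) (e : LTS Qe Lab) : LTS (Qs × Qe) Lab where
  I := (s.I \ e.U) ∪ (e.I \ s.U)
  U := s.U ∪ e.U
  T := fun p a p' =>
    match a with
    | none =>
        (s.T p.1 none p'.1 ∧ p'.2 = p.2) ∨ (e.T p.2 none p'.2 ∧ p'.1 = p.1)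
    | some ℓ =>
        (ℓ ∈ s.L ∧ ℓ ∉ e.L ∧ s.T p.1 (some ℓ) p'.1 ∧ p'.2 = p.2) ∨
        (ℓ ∈ e.L ∧ ℓ ∉ s.L ∧ e.T p.2 (some ℓ) p'.2 ∧ p'.1 = p.1) ∨
        (ℓ ∈ s.L ∧ ℓ ∈ e.L ∧ s.T p.1 (some ℓ) p'.1 ∧ e.T p.2 (some ℓ) p'.2)
  q0 := (s.q0, e.q0)

/-- `s accepts e`: along utraces of `s ∥ e`, every output of `e` that is an
input of `s` is (weakly) enabled in `s`. -/
def Accepts {Qs Qe Lab : Type} (s : LTS Qs Lab) (e : LTS Qe Lab) : Prop :=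
  ∀ σ ∈ (par s e).Utraces, ∀ qs qe, (par s e).W (par s e).q0 σ (qs, qe) →
    ∀ ℓ, ELabel.lab ℓ ∈ e.outq qe → ℓ ∈ s.I → ℓ ∈ s.inq qs

/-- `s mutually accepts e`. -/
def MutuallyAccepts {Qs Qe Lab : Type} (s : LTS Qs Lab) (e : LTS Qe Lab) : Prop :=
  Accepts s e ∧ Accepts e s

/-- `R` is an ecosim for `s` and `e`. -/
def IsEcosim {Qs Qe Lab : Type} (s : LTS Qs Lab) (e : LTS Qe Lab)
    (R : Set (Set Qs × Set Qe)) : Prop :=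
  (s.after [], e.after []) ∈ R ∧
  ∀ Xs Xe, (Xs, Xe) ∈ R →
    (∀ ℓ, ELabel.lab ℓ ∈ e.outSet Xe → ℓ ∈ s.I →
      ℓ ∈ s.inSet Xs ∧
        (s.afterSet Xs [ELabel.lab ℓ], e.afterSet Xe [ELabel.lab ℓ]) ∈ R) ∧
    (∀ ℓ, ELabel.lab ℓ ∈ s.outSet Xs → ℓ ∈ e.I →
      ℓ ∈ e.inSet Xe ∧
        (s.afterSet Xs [ELabel.lab ℓ], e.afterSet Xe [ELabel.lab ℓ]) ∈ R) ∧
    (∀ ℓ, (ELabel.lab ℓ ∈ e.outSet Xe ∨ ℓ ∈ e.inSet Xe) → ℓ ∉ s.L →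
      (Xs, e.afterSet Xe [ELabel.lab ℓ]) ∈ R) ∧
    (∀ ℓ, (ELabel.lab ℓ ∈ s.outSet Xs ∨ ℓ ∈ s.inSet Xs) → ℓ ∉ e.L →
      (s.afterSet Xs [ELabel.lab ℓ], Xe) ∈ R) ∧
    (∀ ℓ, ℓ ∈ s.inSet Xs → ℓ ∈ e.inSet Xe →
      (s.afterSet Xs [ELabel.lab ℓ], e.afterSet Xe [ELabel.lab ℓ]) ∈ R) ∧
    (ELabel.delta ∈ s.outSet Xs → ELabel.delta ∈ e.outSet Xe →
      (s.afterSet Xs [ELabel.delta], e.afterSet Xe [ELabel.delta]) ∈ R)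

/-- `s eco e`: there exists an ecosim for `s` and `e`. -/
def Eco {Qs Qe Lab : Type} (s : LTS Qs Lab) (e : LTS Qe Lab) : Prop :=
  ∃ R, IsEcosim s e R

/-- `R_U(s,e)`: the smallest relation closed under the given rules. -/
inductive RU {Qs Qe Lab : Type} (s : LTS Qs Lab) (e : LTS Qe Lab) :
    Set Qs → Set Qe → Prop
  | base : RU s e (s.after []) (e.after [])
  | syncOutE {Xs : Set Qs} {Xe : Set Qe} (ℓ : Lab) :
      RU s e Xs Xe → ELabel.lab ℓ ∈ e.outSet Xe → ℓ ∈ s.I →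
      RU s e (s.afterSet Xs [ELabel.lab ℓ]) (e.afterSet Xe [ELabel.lab ℓ])
  | syncOutS {Xs : Set Qs} {Xe : Set Qe} (ℓ : Lab) :
      RU s e Xs Xe → ELabel.lab ℓ ∈ s.outSet Xs → ℓ ∈ e.I →
      RU s e (s.afterSet Xs [ELabel.lab ℓ]) (e.afterSet Xe [ELabel.lab ℓ])
  | internalE {Xs : Set Qs} {Xe : Set Qe} (ℓ : Lab) :
      RU s e Xs Xe → (ELabel.lab ℓ ∈ e.outSet Xe ∨ ℓ ∈ e.inSet Xe) → ℓ ∉ s.L →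
      RU s e Xs (e.afterSet Xe [ELabel.lab ℓ])
  | internalS {Xs : Set Qs} {Xe : Set Qe} (ℓ : Lab) :
      RU s e Xs Xe → (ELabel.lab ℓ ∈ s.outSet Xs ∨ ℓ ∈ s.inSet Xs) → ℓ ∉ e.L →
      RU s e (s.afterSet Xs [ELabel.lab ℓ]) Xe
  | syncIn {Xs : Set Qs} {Xe : Set Qe} (ℓ : Lab) :
      RU s e Xs Xe → ℓ ∈ s.inSet Xs → ℓ ∈ e.inSet Xe →
      RU s e (s.afterSet Xs [ELabel.lab ℓ]) (e.afterSet Xe [ELabel.lab ℓ])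
  | qdelta {Xs : Set Qs} {Xe : Set Qe} :
      RU s e Xs Xe → ELabel.delta ∈ s.outSet Xs → ELabel.delta ∈ e.outSet Xe →
      RU s e (s.afterSet Xs [ELabel.delta]) (e.afterSet Xe [ELabel.delta])

open Classical in
/-- Projection `σ↾𝓛^δ` of a trace onto an (extended) label set: keeps `δ`
and the labels in `Ls`, removes all other labels. -/
noncomputable def projD {Lab : Type} (σ : List (ELabel Lab)) (Ls : Set Lab) :
    List (ELabel Lab) :=
  σ.filter fun x => decide (ELabel.inL Ls x)

open Classical in
/-- Projection `σ↾𝓛` of a trace of plain labels onto a label set. -/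
noncomputable def projL {Lab : Type} (σ : List Lab) (Ls : Set Lab) : List Lab :=
  σ.filter fun ℓ => decide (ℓ ∈ Ls)

open Classical in
/-- Substitution `σ[θ/δ]` of the label `θ` by the quiescence label `δ`. -/
noncomputable def substTheta {Lab : Type} (θ : Lab) (σ : List Lab) :
    List (ELabel Lab) :=
  σ.map fun ℓ => if ℓ = θ then ELabel.delta else ELabel.lab ℓ

/-- `⟨X⟩`: componentwise collection of a set of pairs of states. -/
def collect {Qs Qe : Type} (X : Set (Qs × Qe)) : Set Qs × Set Qe :=
  (Prod.fst '' X, Prod.snd '' X)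

/-- `q_s accepts q_e over σ`. -/
def AcceptsOver {Qs Qe Lab : Type} (s : LTS Qs Lab) (e : LTS Qe Lab)
    (qs : Qs) (qe : Qe) (σ : List (ELabel Lab)) : Prop :=
  ∀ σ1 σ2 : List (ELabel Lab), σ1 ++ σ2 = σ →
    ∀ (qs' : Qs) (qe' : Qe), (par s e).W (qs, qe) σ1 (qs', qe') →
      ∀ ℓ, ELabel.lab ℓ ∈ e.outq qe' → ℓ ∈ s.I → ℓ ∈ s.inq qs' ∧ ℓ ∈ e.U

/-- `q_s mutually accepts q_e over σ`. -/
def MutuallyAcceptsOver {Qs Qe Lab : Type} (s : LTS Qs Lab) (e : LTS Qe Lab)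
    (qs : Qs) (qe : Qe) (σ : List (ELabel Lab)) : Prop :=
  AcceptsOver s e qs qe σ ∧ AcceptsOver e s qe qs σ

/-- A test case: a quasi-finite tree-shaped LTS without `τ`-transitions, with
terminal states `pass` and `fail` carrying input self-loops, a special
quiescence-observation input `θ`, at most one output transition per state,
and receptive to all inputs other than `θ`. -/
structure TestCase (Qt Lab : Type) extends LTS Qt Lab where
  passS : Qt
  failS : Qt
  theta : Lab
  theta_input : theta ∈ I
  no_tau : ∀ q q', ¬ T q none q'
  tree : ∀ q, q ≠ q0 → q ≠ passS → q ≠ failS →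
    ∃! p : Qt × Option Lab, T p.1 p.2 q
  pass_loops : ∀ ℓ ∈ I, T passS (some ℓ) passS
  pass_terminal : ∀ a q', T passS a q' → q' = passS ∧ ∃ ℓ ∈ I, a = some ℓ
  fail_loops : ∀ ℓ ∈ I, T failS (some ℓ) failS
  fail_terminal : ∀ a q', T failS a q' → q' = failS ∧ ∃ ℓ ∈ I, a = some ℓ
  one_output : ∀ q ℓ ℓ' q' q'', ℓ ∈ U → ℓ' ∈ U →
    T q (some ℓ) q' → T q (some ℓ') q'' → ℓ = ℓ' ∧ q' = q''
  receptive : ∀ q, ∀ ℓ ∈ I, ℓ ≠ theta → ∃ q', T q (some ℓ) q'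

/-- Test execution `t ⫿ i` of a test case `t` with an implementation `i`. -/
def testExec {Qt Qi Lab : Type} (t : TestCase Qt Lab) (i : LTS Qi Lab) :
    LTS (Qt × Qi) Lab where
  I := ∅
  U := i.U ∪ (t.toLTS.L \ {t.theta})
  T := fun p a p' =>
    match a with
    | none => i.T p.2 none p'.2 ∧ p'.1 = p.1
    | some ℓ =>
        (ℓ ∈ i.L ∧ ℓ ∉ t.toLTS.L ∧ i.T p.2 (some ℓ) p'.2 ∧ p'.1 = p.1) ∨
        (ℓ ∈ t.toLTS.L ∧ ℓ ∉ i.L ∧ ℓ ≠ t.theta ∧ t.T p.1 (some ℓ) p'.1 ∧ p'.2 = p.2) ∨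
        (ℓ ∈ i.L ∧ ℓ ∈ t.toLTS.L ∧ t.T p.1 (some ℓ) p'.1 ∧ i.T p.2 (some ℓ) p'.2) ∨
        (ℓ = t.theta ∧ t.T p.1 (some ℓ) p'.1 ∧ p'.2 = p.2 ∧ i.Quiescent p.2)
  q0 := (t.q0, i.q0)

/-!
For `s eco e`, every pair `(Xs, Xe)` in `R_U` consists of nonempty `τ`-closed sets that accept each
other's outputs. On the product `Xs ×ˢ Xe` of such a pair the composition behaves componentwise: the
states reached by `x` are the product of the states that the components reach by the projection of
`x` to their own alphabets, and `x` may extend a utrace exactly when each component whose alphabet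
contains `x` either produces it somewhere or accepts it as an input everywhere. The latter condition
is what the rules of `R_U` ask for, so `s ∥ e after σ` is a product of a pair in `R_U` for every
utrace `σ`, and every pair in `R_U` arises in this way.
-/

theorem projD_singleton_of_inL {Lab : Type} {Ls : Set Lab} {x : ELabel Lab}
    (hx : ELabel.inL Ls x) : projD [x] Ls = [x] := by
  simp [projD, hx]

theorem projD_singleton_of_not_inL {Lab : Type} {Ls : Set Lab} {x : ELabel Lab}
    (hx : ¬ ELabel.inL Ls x) : projD [x] Ls = [] := by
  simp [projD, hx]

theorem ELabel.inL_union_left {Lab : Type} {Ls Ls' : Set Lab} {x : ELabel Lab}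
    (hx : ELabel.inL Ls x) : ELabel.inL (Ls ∪ Ls') x := by
  cases x with
  | delta => trivial
  | lab ℓ => exact .inl hx

namespace LTS

variable {Q Lab : Type} {M : LTS Q Lab} {X : Set Q} {q q' q'' : Q} {ℓ : Lab} {x : ELabel Lab}
  {σ : List (ELabel Lab)}

theorem W_nil_iff : M.W q [] q' ↔ M.Eps q q' := by
  refine ⟨fun h => ?_, W.nil⟩
  generalize hσ : ([] : List (ELabel Lab)) = σ at h
  cases h with
  | nil h => exact h
  | snoc => simp at hσ

theorem W_append_singleton_iff :
    M.W q (σ ++ [x]) q' ↔ ∃ q₁ q₂, M.W q σ q₁ ∧ M.VStep q₁ x q₂ ∧ M.Eps q₂ q' := by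
  refine ⟨fun h => ?_, fun ⟨_, _, hσ, hx, hε⟩ => .snoc hσ hx hε⟩
  generalize hρ : σ ++ [x] = ρ at h
  cases h with
  | nil => simp at hρ
  | snoc hσ hx hε =>
    obtain ⟨rfl, rfl⟩ := List.append_singleton_inj.1 hρ
    exact ⟨_, _, hσ, hx, hε⟩

theorem W_singleton_iff :
    M.W q [x] q' ↔ ∃ q₁ q₂, M.Eps q q₁ ∧ M.VStep q₁ x q₂ ∧ M.Eps q₂ q' := by
  simpa only [List.nil_append, W_nil_iff] using W_append_singleton_iff (M := M) (σ := [])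

theorem W.trans_eps (h : M.W q σ q') (hε : M.Eps q' q'') : M.W q σ q'' := by
  cases h with
  | nil h => exact .nil (h.trans hε)
  | snoc hσ hx h => exact .snoc hσ hx (h.trans hε)

theorem W_append_singleton_iff_exists_W :
    M.W q (σ ++ [x]) q' ↔ ∃ q₁, M.W q σ q₁ ∧ M.W q₁ [x] q' := by
  simp only [W_append_singleton_iff, W_singleton_iff]
  constructor
  · rintro ⟨q₁, q₂, hσ, hx, hε⟩
    exact ⟨q₁, hσ, q₁, q₂, .refl, hx, hε⟩
  · rintro ⟨q₀, hσ, q₁, q₂, hε, hx, hε'⟩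
    exact ⟨q₁, q₂, hσ.trans_eps hε, hx, hε'⟩

theorem after_append_singleton : M.after (σ ++ [x]) = M.afterSet (M.after σ) [x] :=
  Set.ext fun _ => W_append_singleton_iff_exists_W

/-- `X` is closed under `τ`-steps, as is every set of the form `M after σ`. -/
def EpsClosed (M : LTS Q Lab) (X : Set Q) : Prop :=
  ∀ ⦃q⦄, q ∈ X → ∀ ⦃q'⦄, M.Eps q q' → q' ∈ X

theorem epsClosed_after (M : LTS Q Lab) (σ : List (ELabel Lab)) : M.EpsClosed (M.after σ) :=
  fun _ hq _ hε => W.trans_eps hq hε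

theorem epsClosed_afterSet (M : LTS Q Lab) (X : Set Q) (σ : List (ELabel Lab)) :
    M.EpsClosed (M.afterSet X σ) :=
  fun _ ⟨p, hp, hσ⟩ _ hε => ⟨p, hp, hσ.trans_eps hε⟩

theorem EpsClosed.afterSet_nil (hX : M.EpsClosed X) : M.afterSet X [] = X := by
  ext q
  exact ⟨fun ⟨_, hp, h⟩ => hX hp (W_nil_iff.1 h), fun hq => ⟨q, hq, .nil .refl⟩⟩

theorem mem_inSet_iff : ℓ ∈ M.inSet X ↔ ∀ q ∈ X, ℓ ∈ M.I ∧ ∃ q', M.W q [.lab ℓ] q' := by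
  simp only [inSet, inq, Set.mem_iInter, Set.mem_ofPred_eq]

theorem mem_outSet_iff : x ∈ M.outSet X ↔ ∃ q ∈ X, M.outLabel q x := by
  simp only [outSet, outq, Set.mem_iUnion, Set.mem_ofPred_eq, exists_prop]

theorem mem_U_of_lab_mem_outSet (h : .lab ℓ ∈ M.outSet X) : ℓ ∈ M.U :=
  let ⟨_, _, hU, _⟩ := mem_outSet_iff.1 h
  hU

theorem inL_of_mem_outSet (h : x ∈ M.outSet X) : ELabel.inL M.L x := by
  cases x with
  | delta => trivial
  | lab ℓ => exact .inr (mem_U_of_lab_mem_outSet h)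

theorem afterSet_nonempty_of_mem_outSet (h : x ∈ M.outSet X) : (M.afterSet X [x]).Nonempty := by
  obtain ⟨q, hq, hout⟩ := mem_outSet_iff.1 h
  obtain ⟨q', hstep⟩ : ∃ q', M.VStep q x q' := by
    cases x with
    | delta => exact ⟨q, rfl, hout⟩
    | lab ℓ => exact hout.2
  exact ⟨q', q, hq, W_singleton_iff.2 ⟨q, q', .refl, hstep, .refl⟩⟩

theorem EpsClosed.mem_outSet_of_afterSet_nonempty (hX : M.EpsClosed X)
    (hx : ELabel.inL M.U x) (h : (M.afterSet X [x]).Nonempty) : x ∈ M.outSet X := by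
  obtain ⟨_, q, hq, hW⟩ := h
  obtain ⟨q₁, q₂, hε, hstep, -⟩ := W_singleton_iff.1 hW
  refine mem_outSet_iff.2 ⟨q₁, hX hq hε, ?_⟩
  cases x with
  | delta => exact hstep.2
  | lab ℓ => exact ⟨hx, q₂, hstep⟩

/-- The labels by which utraces ending in `X` may be extended: those produced by some state of `X`,
and the inputs accepted by all of them. -/
def offered (M : LTS Q Lab) (X : Set Q) : Set (ELabel Lab) :=
  M.outSet X ∪ ELabel.lab '' M.inSet X

theorem lab_mem_offered_iff : .lab ℓ ∈ M.offered X ↔ .lab ℓ ∈ M.outSet X ∨ ℓ ∈ M.inSet X := by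
  simp [offered]

theorem delta_mem_offered_iff : .delta ∈ M.offered X ↔ .delta ∈ M.outSet X := by
  simp [offered]

theorem inL_of_mem_offered (hX : X.Nonempty) (h : x ∈ M.offered X) : ELabel.inL M.L x := by
  rcases h with hout | ⟨ℓ, hin, rfl⟩
  · exact inL_of_mem_outSet hout
  · exact .inl (mem_inSet_iff.1 hin _ hX.some_mem).1

theorem afterSet_nonempty_of_mem_inSet (hX : X.Nonempty) (h : ℓ ∈ M.inSet X) :
    (M.afterSet X [.lab ℓ]).Nonempty :=
  let ⟨q, hq⟩ := hX
  let ⟨_, q', hW⟩ := mem_inSet_iff.1 h q hq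
  ⟨q', q, hq, hW⟩

theorem afterSet_nonempty_of_mem_offered (hX : X.Nonempty) (h : x ∈ M.offered X) :
    (M.afterSet X [x]).Nonempty := by
  rcases h with hout | ⟨ℓ, hin, rfl⟩
  · exact afterSet_nonempty_of_mem_outSet hout
  · exact afterSet_nonempty_of_mem_inSet hX hin

theorem exists_W_of_mem_offered (hℓ : ℓ ∉ M.U) (h : .lab ℓ ∈ M.offered X) (hq : q ∈ X) :
    ∃ q', M.W q [.lab ℓ] q' := by
  rcases h with hout | ⟨_, hin, ⟨⟩⟩
  · exact absurd (mem_U_of_lab_mem_outSet hout) hℓ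
  · exact (mem_inSet_iff.1 hin q hq).2

theorem afterSet_projD_nonempty (hX : M.EpsClosed X) (hne : X.Nonempty)
    (h : ELabel.inL M.L x → x ∈ M.offered X) : (M.afterSet X (projD [x] M.L)).Nonempty := by
  by_cases hx : ELabel.inL M.L x
  · rw [projD_singleton_of_inL hx]
    exact afterSet_nonempty_of_mem_offered hne (h hx)
  · rwa [projD_singleton_of_not_inL hx, hX.afterSet_nil]

theorem exists_W_projD_of_offered (hℓ : ℓ ∉ M.U)
    (h : ELabel.inL M.L (.lab ℓ) → .lab ℓ ∈ M.offered X) (hq : q ∈ X) :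
    ∃ q', M.W q (projD [.lab ℓ] M.L) q' := by
  by_cases hx : ELabel.inL M.L (.lab ℓ)
  · rw [projD_singleton_of_inL hx]
    exact exists_W_of_mem_offered hℓ (h hx) hq
  · rw [projD_singleton_of_not_inL hx]
    exact ⟨q, .nil .refl⟩

theorem EpsClosed.mem_offered_iff (hM : Disjoint M.I M.U) (hX : M.EpsClosed X)
    (hne : X.Nonempty) :
    x ∈ M.offered X ↔ ELabel.inL M.L x ∧ (M.afterSet X [x]).Nonempty ∧
      ∀ ℓ ∈ M.I, x = .lab ℓ → ∀ q ∈ X, ∃ q', M.W q [x] q' := by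
  constructor
  · refine fun h => ⟨inL_of_mem_offered hne h, afterSet_nonempty_of_mem_offered hne h, ?_⟩
    rintro ℓ hI rfl q hq
    exact exists_W_of_mem_offered (Set.disjoint_left.1 hM hI) h hq
  · rintro ⟨hL, hafter, hin⟩
    cases x with
    | delta => exact .inl (hX.mem_outSet_of_afterSet_nonempty trivial hafter)
    | lab ℓ =>
      rcases hL with hI | hU
      · exact .inr ⟨ℓ, mem_inSet_iff.2 fun q hq => ⟨hI, hin ℓ hI rfl q hq⟩, rfl⟩
      · exact .inl (hX.mem_outSet_of_afterSet_nonempty hU hafter)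

theorem nil_mem_Utraces (M : LTS Q Lab) : [] ∈ M.Utraces :=
  ⟨nofun, ⟨M.q0, .nil .refl⟩, fun _ _ _ h => by simp at h⟩

theorem append_singleton_mem_Utraces_iff :
    σ ++ [x] ∈ M.Utraces ↔ σ ∈ M.Utraces ∧ ELabel.inL M.L x ∧
      (M.afterSet (M.after σ) [x]).Nonempty ∧
      ∀ ℓ ∈ M.I, x = .lab ℓ → ∀ q ∈ M.after σ, ∃ q', M.W q [x] q' := by
  rw [← after_append_singleton]
  constructor
  · rintro ⟨hL, ⟨q', hW⟩, hin⟩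
    obtain ⟨q, hq, -⟩ := W_append_singleton_iff_exists_W.1 hW
    refine ⟨⟨fun y hy => hL y (List.mem_append_left _ hy), ⟨q, hq⟩, ?_⟩, hL x (by simp),
      ⟨q', hW⟩, ?_⟩
    · rintro σ₁ ℓ σ₂ rfl
      exact hin σ₁ ℓ (σ₂ ++ [x]) (by simp)
    · rintro ℓ hI rfl
      exact hin σ ℓ [] rfl hI
  · rintro ⟨⟨hL, -, hin⟩, hLx, ⟨q', hW⟩, hinx⟩
    refine ⟨?_, ⟨q', hW⟩, fun σ₁ ℓ σ₂ hσ hI => ?_⟩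
    · simpa [TraceIn, or_imp, forall_and] using ⟨hL, hLx⟩
    · rcases List.eq_nil_or_concat' σ₂ with rfl | ⟨σ₂, y, rfl⟩
      · obtain ⟨rfl, rfl⟩ := List.append_singleton_inj.1 hσ
        exact hinx ℓ hI rfl
      · rw [← List.cons_append, ← List.append_assoc] at hσ
        exact hin σ₁ ℓ σ₂ (List.append_singleton_inj.1 hσ).1 hI

theorem append_singleton_mem_Utraces_iff_mem_offered (hM : Disjoint M.I M.U) :
    σ ++ [x] ∈ M.Utraces ↔ σ ∈ M.Utraces ∧ x ∈ M.offered (M.after σ) := by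
  rw [append_singleton_mem_Utraces_iff]
  exact and_congr_right fun hσ => ((M.epsClosed_after σ).mem_offered_iff hM hσ.2.1).symm

/-- The contribution of the component `M` to a step `x` of a composition: a step labelled `x` if `x`
belongs to the alphabet of `M`, and no move otherwise. -/
def LocalStep (M : LTS Q Lab) (q : Q) (x : ELabel Lab) (q' : Q) : Prop :=
  (ELabel.inL M.L x → M.VStep q x q') ∧ (¬ ELabel.inL M.L x → q' = q)

theorem W_projD_singleton_iff :
    M.W q (projD [x] M.L) q' ↔ ∃ q₁ q₂, M.Eps q q₁ ∧ M.LocalStep q₁ x q₂ ∧ M.Eps q₂ q' := by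
  by_cases hx : ELabel.inL M.L x
  · simp only [projD_singleton_of_inL hx, W_singleton_iff, LocalStep, hx, true_imp_iff,
      not_true, false_imp_iff, and_true]
  · simp only [projD_singleton_of_not_inL hx, W_nil_iff, LocalStep, hx, false_imp_iff,
      not_false_iff, true_imp_iff, true_and]
    exact ⟨fun hε => ⟨q, q, .refl, rfl, hε⟩, fun ⟨_, _, hε, heq, hε'⟩ => hε.trans (heq ▸ hε')⟩

theorem W.exists_T_of_stable (h : M.W q [.lab ℓ] q') (hτ : ∀ q', ¬ M.T q none q') :
    ∃ q₁, M.T q (some ℓ) q₁ := by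
  obtain ⟨q₁, q₂, hε, hT, -⟩ := W_singleton_iff.1 h
  rcases Relation.ReflTransGen.cases_head hε with rfl | ⟨r, hr, -⟩
  · exact ⟨q₂, hT⟩
  · exact absurd hr (hτ r)

end LTS

section Par

variable {Qs Qe Lab : Type} {s : LTS Qs Lab} {e : LTS Qe Lab} {Xs : Set Qs} {Xe : Set Qe}
  {p p' : Qs × Qe} {ℓ : Lab} {x : ELabel Lab}

theorem par_L (s : LTS Qs Lab) (e : LTS Qe Lab) : (par s e).L = s.L ∪ e.L := by
  ext ℓ
  simp only [LTS.L, par, Set.mem_union, Set.mem_sdiff]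
  tauto

theorem disjoint_par_I_par_U (hs : Disjoint s.I s.U) (he : Disjoint e.I e.U) :
    Disjoint (par s e).I (par s e).U := by
  rw [Set.disjoint_left] at *
  rintro ℓ (⟨hI, hU⟩ | ⟨hI, hU⟩) (hU' | hU')
  exacts [hs hI hU', hU hU', hU hU', he hI hU']

theorem par_eps_iff : (par s e).Eps p p' ↔ s.Eps p.1 p'.1 ∧ e.Eps p.2 p'.2 := by
  constructor
  · refine fun h => ⟨h.lift' Prod.fst ?_, h.lift' Prod.snd ?_⟩
    · rintro p p' (⟨hT, -⟩ | ⟨-, heq⟩)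
      exacts [.single hT, (congrArg (s.Eps p.1) heq).mpr .refl]
    · rintro p p' (⟨-, heq⟩ | ⟨hT, -⟩)
      exacts [(congrArg (e.Eps p.2) heq).mpr .refl, .single hT]
  · rintro ⟨hs, he⟩
    have hfst : (par s e).Eps (p.1, p.2) (p'.1, p.2) :=
      hs.lift (·, p.2) fun _ _ hT => .inl ⟨hT, rfl⟩
    have hsnd : (par s e).Eps (p'.1, p.2) (p'.1, p'.2) :=
      he.lift (p'.1, ·) fun _ _ hT => .inr ⟨hT, rfl⟩
    exact hfst.trans hsnd

theorem par_after_nil (s : LTS Qs Lab) (e : LTS Qe Lab) :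
    (par s e).after [] = s.after [] ×ˢ e.after [] := by
  ext p
  simp only [LTS.after, Set.mem_prod, Set.mem_ofPred_eq, LTS.W_nil_iff]
  exact par_eps_iff

theorem par_vStep_lab_iff (hℓ : ℓ ∈ s.L ∪ e.L) :
    (par s e).VStep p (.lab ℓ) p' ↔
      s.LocalStep p.1 (.lab ℓ) p'.1 ∧ e.LocalStep p.2 (.lab ℓ) p'.2 := by
  simp only [LTS.LocalStep, LTS.VStep, ELabel.inL, par]
  by_cases hs : ℓ ∈ s.L <;> by_cases he : ℓ ∈ e.L
  · simp [hs, he]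
  · simp [hs, he]
  · simp [hs, he, and_comm]
  · exact absurd hℓ (by simp [hs, he])

theorem par_T_swap {a : Option Lab} : (par e s).T p.swap a p'.swap ↔ (par s e).T p a p' := by
  cases a <;> simp only [par, Prod.fst_swap, Prod.snd_swap] <;> tauto

theorem LTS.Quiescent.par_swap (h : (par s e).Quiescent p) : (par e s).Quiescent p.swap :=
  ⟨fun ℓ hℓ p' hT => h.1 ℓ hℓ.symm p'.swap (par_T_swap.1 hT),
    fun p' hT => h.2 p'.swap (par_T_swap.1 hT)⟩

theorem Composable.symm (h : Composable s e) : Composable e s :=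
  (Set.inter_comm _ _).trans h

theorem Composable.mem_I_of_mem_U (hcomp : Composable s e) (hs : ℓ ∈ s.U) (he : ℓ ∈ e.L) :
    ℓ ∈ e.I :=
  he.resolve_right fun hU => (hcomp.le ⟨hs, hU⟩ : ℓ ∈ (∅ : Set Lab))

theorem LTS.Quiescent.fst_of_par (hcomp : Composable s e)
    (hacc : ∀ ℓ ∈ e.I, .lab ℓ ∈ s.outq p.1 → ℓ ∈ e.inq p.2) (h : (par s e).Quiescent p) :
    s.Quiescent p.1 := by
  refine ⟨fun ℓ hU q hT => ?_, fun q hT => h.2 (q, p.2) (.inl ⟨hT, rfl⟩)⟩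
  by_cases hL : ℓ ∈ e.L
  · obtain ⟨-, _, hW⟩ := hacc ℓ (hcomp.mem_I_of_mem_U hU hL) ⟨hU, q, hT⟩
    obtain ⟨r, hr⟩ := hW.exists_T_of_stable fun r hr => h.2 (p.1, r) (.inr ⟨hr, rfl⟩)
    exact h.1 ℓ (.inl hU) (q, r) (.inr (.inr ⟨.inr hU, hL, hT, hr⟩))
  · exact h.1 ℓ (.inl hU) (q, p.2) (.inl ⟨.inr hU, hL, hT, rfl⟩)

theorem par_quiescent (hs : s.Quiescent p.1) (he : e.Quiescent p.2) :
    (par s e).Quiescent p := by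
  refine ⟨?_, ?_⟩
  · rintro ℓ (hU | hU) p' (⟨-, hL, hT, -⟩ | ⟨-, hL, hT, -⟩ | ⟨-, -, hTs, hTe⟩)
    exacts [hs.1 ℓ hU _ hT, hL (.inr hU), hs.1 ℓ hU _ hTs, hL (.inr hU), he.1 ℓ hU _ hT,
      he.1 ℓ hU _ hTe]
  · rintro p' (⟨hT, -⟩ | ⟨hT, -⟩)
    exacts [hs.2 _ hT, he.2 _ hT]

/-- The properties of the pairs in `R_U(s, e)` that make `s ∥ e` behave componentwise on
`Xs ×ˢ Xe`: both sets are nonempty and closed under `τ`-steps, and each side accepts the outputs of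
the other. -/
structure Compatible (s : LTS Qs Lab) (e : LTS Qe Lab) (Xs : Set Qs) (Xe : Set Qe) : Prop where
  nonempty_left : Xs.Nonempty
  nonempty_right : Xe.Nonempty
  epsClosed_left : s.EpsClosed Xs
  epsClosed_right : e.EpsClosed Xe
  accepts_left : ∀ ℓ ∈ s.I, .lab ℓ ∈ e.outSet Xe → ℓ ∈ s.inSet Xs
  accepts_right : ∀ ℓ ∈ e.I, .lab ℓ ∈ s.outSet Xs → ℓ ∈ e.inSet Xe

/-- `x` is a label of `s ∥ e` that is offered by each component having `x` in its alphabet. -/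
def JointlyOffered (s : LTS Qs Lab) (e : LTS Qe Lab) (Xs : Set Qs) (Xe : Set Qe)
    (x : ELabel Lab) : Prop :=
  ELabel.inL (s.L ∪ e.L) x ∧ (ELabel.inL s.L x → x ∈ s.offered Xs) ∧
    (ELabel.inL e.L x → x ∈ e.offered Xe)

namespace Compatible

theorem symm (h : Compatible s e Xs Xe) : Compatible e s Xe Xs :=
  ⟨h.nonempty_right, h.nonempty_left, h.epsClosed_right, h.epsClosed_left, h.accepts_right,
    h.accepts_left⟩

theorem epsClosed_prod (h : Compatible s e Xs Xe) : (par s e).EpsClosed (Xs ×ˢ Xe) :=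
  fun _ hp _ hε => ⟨h.epsClosed_left hp.1 (par_eps_iff.1 hε).1,
    h.epsClosed_right hp.2 (par_eps_iff.1 hε).2⟩

theorem nonempty_prod (h : Compatible s e Xs Xe) : (Xs ×ˢ Xe).Nonempty :=
  h.nonempty_left.prod h.nonempty_right

theorem quiescent_fst (hcomp : Composable s e) (h : Compatible s e Xs Xe) (hp : p ∈ Xs ×ˢ Xe)
    (hq : (par s e).Quiescent p) : s.Quiescent p.1 := by
  refine hq.fst_of_par hcomp fun ℓ hI hout => ?_
  have hin : ℓ ∈ e.inSet Xe := h.accepts_right ℓ hI (LTS.mem_outSet_iff.2 ⟨p.1, hp.1, hout⟩)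
  exact LTS.mem_inSet_iff.1 hin p.2 hp.2

theorem par_quiescent_iff (hcomp : Composable s e) (h : Compatible s e Xs Xe)
    (hp : p ∈ Xs ×ˢ Xe) : (par s e).Quiescent p ↔ s.Quiescent p.1 ∧ e.Quiescent p.2 :=
  ⟨fun hq => ⟨h.quiescent_fst hcomp hp hq,
    h.symm.quiescent_fst hcomp.symm (p := p.swap) hp.symm hq.par_swap⟩,
    fun hq => par_quiescent hq.1 hq.2⟩

theorem par_vStep_iff (hcomp : Composable s e) (h : Compatible s e Xs Xe) (hp : p ∈ Xs ×ˢ Xe)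
    (hx : ELabel.inL (s.L ∪ e.L) x) :
    (par s e).VStep p x p' ↔ s.LocalStep p.1 x p'.1 ∧ e.LocalStep p.2 x p'.2 := by
  cases x with
  | lab ℓ => exact par_vStep_lab_iff hx
  | delta =>
    simp only [LTS.LocalStep, LTS.VStep, ELabel.inL, h.par_quiescent_iff hcomp hp, Prod.ext_iff]
    tauto

theorem par_W_singleton_iff (hcomp : Composable s e) (h : Compatible s e Xs Xe)
    (hp : p ∈ Xs ×ˢ Xe) (hx : ELabel.inL (s.L ∪ e.L) x) :
    (par s e).W p [x] p' ↔ s.W p.1 (projD [x] s.L) p'.1 ∧ e.W p.2 (projD [x] e.L) p'.2 := by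
  simp only [LTS.W_singleton_iff, LTS.W_projD_singleton_iff]
  constructor
  · rintro ⟨p₁, p₂, hε, hstep, hε'⟩
    rw [h.par_vStep_iff hcomp (h.epsClosed_prod hp hε) hx] at hstep
    rw [par_eps_iff] at hε hε'
    exact ⟨⟨p₁.1, p₂.1, hε.1, hstep.1, hε'.1⟩, ⟨p₁.2, p₂.2, hε.2, hstep.2, hε'.2⟩⟩
  · rintro ⟨⟨a₁, a₂, hεs, hs, hεs'⟩, ⟨b₁, b₂, hεe, he, hεe'⟩⟩
    have hε : (par s e).Eps p (a₁, b₁) := par_eps_iff.2 ⟨hεs, hεe⟩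
    exact ⟨(a₁, b₁), (a₂, b₂), hε,
      (h.par_vStep_iff hcomp (h.epsClosed_prod hp hε) hx).2 ⟨hs, he⟩,
      par_eps_iff.2 ⟨hεs', hεe'⟩⟩

theorem par_afterSet_prod (hcomp : Composable s e) (h : Compatible s e Xs Xe)
    (hx : ELabel.inL (s.L ∪ e.L) x) :
    (par s e).afterSet (Xs ×ˢ Xe) [x] =
      s.afterSet Xs (projD [x] s.L) ×ˢ e.afterSet Xe (projD [x] e.L) := by
  ext p'
  constructor
  · rintro ⟨p, hp, hW⟩
    rw [h.par_W_singleton_iff hcomp hp hx] at hW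
    exact ⟨⟨p.1, hp.1, hW.1⟩, ⟨p.2, hp.2, hW.2⟩⟩
  · rintro ⟨⟨a, ha, hs⟩, ⟨b, hb, he⟩⟩
    have hp : (a, b) ∈ Xs ×ˢ Xe := ⟨ha, hb⟩
    exact ⟨(a, b), hp, (h.par_W_singleton_iff hcomp hp hx).2 ⟨hs, he⟩⟩

theorem mem_offered_left (h : Compatible s e Xs Xe) (hx : ELabel.inL s.L x)
    (hs : (s.afterSet Xs (projD [x] s.L)).Nonempty)
    (he : (e.afterSet Xe (projD [x] e.L)).Nonempty)
    (hin : ∀ ℓ ∈ s.I \ e.U, x = .lab ℓ → ∀ a ∈ Xs, ∃ a', s.W a (projD [x] s.L) a') :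
    x ∈ s.offered Xs := by
  rw [projD_singleton_of_inL hx] at hs hin
  cases x with
  | delta => exact .inl (h.epsClosed_left.mem_outSet_of_afterSet_nonempty trivial hs)
  | lab ℓ =>
    rcases hx with hI | hU
    · refine .inr ⟨ℓ, ?_, rfl⟩
      by_cases hUe : ℓ ∈ e.U
      · have hLe : ELabel.inL e.L (.lab ℓ) := Set.mem_union_right _ hUe
        rw [projD_singleton_of_inL hLe] at he
        exact h.accepts_left ℓ hI
          (h.epsClosed_right.mem_outSet_of_afterSet_nonempty hUe he)
      · exact LTS.mem_inSet_iff.2 fun a ha => ⟨hI, hin ℓ ⟨hI, hUe⟩ rfl a ha⟩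
    · exact .inl (h.epsClosed_left.mem_outSet_of_afterSet_nonempty hU hs)

theorem jointlyOffered_of_mem_par_offered (hs : Disjoint s.I s.U) (he : Disjoint e.I e.U)
    (hcomp : Composable s e) (h : Compatible s e Xs Xe)
    (hx : x ∈ (par s e).offered (Xs ×ˢ Xe)) : JointlyOffered s e Xs Xe x := by
  rw [h.epsClosed_prod.mem_offered_iff (disjoint_par_I_par_U hs he) h.nonempty_prod, par_L] at hx
  obtain ⟨hL, hafter, hin⟩ := hx
  rw [h.par_afterSet_prod hcomp hL, Set.prod_nonempty_iff] at hafter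
  have hW : ∀ ℓ ∈ (par s e).I, x = .lab ℓ → ∀ a ∈ Xs, ∀ b ∈ Xe,
      (∃ a', s.W a (projD [x] s.L) a') ∧ ∃ b', e.W b (projD [x] e.L) b' := by
    intro ℓ hI hxℓ a ha b hb
    obtain ⟨⟨a', b'⟩, hab⟩ := hin ℓ hI hxℓ (a, b) ⟨ha, hb⟩
    rw [h.par_W_singleton_iff hcomp ⟨ha, hb⟩ hL] at hab
    exact ⟨⟨a', hab.1⟩, ⟨b', hab.2⟩⟩
  obtain ⟨a₀, ha₀⟩ := h.nonempty_left
  obtain ⟨b₀, hb₀⟩ := h.nonempty_right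
  exact ⟨hL,
    fun hLs => h.mem_offered_left hLs hafter.1 hafter.2 fun ℓ hI hxℓ a ha =>
      (hW ℓ (.inl hI) hxℓ a ha b₀ hb₀).1,
    fun hLe => h.symm.mem_offered_left hLe hafter.2 hafter.1 fun ℓ hI hxℓ b hb =>
      (hW ℓ (.inr hI) hxℓ a₀ ha₀ b hb).2⟩

theorem mem_par_offered_of_jointlyOffered (hs : Disjoint s.I s.U) (he : Disjoint e.I e.U)
    (hcomp : Composable s e) (h : Compatible s e Xs Xe) (hx : JointlyOffered s e Xs Xe x) :
    x ∈ (par s e).offered (Xs ×ˢ Xe) := by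
  obtain ⟨hL, hxs, hxe⟩ := hx
  have hdisj := disjoint_par_I_par_U hs he
  rw [h.epsClosed_prod.mem_offered_iff hdisj h.nonempty_prod, par_L,
    h.par_afterSet_prod hcomp hL, Set.prod_nonempty_iff]
  refine ⟨hL, ⟨LTS.afterSet_projD_nonempty h.epsClosed_left h.nonempty_left hxs,
    LTS.afterSet_projD_nonempty h.epsClosed_right h.nonempty_right hxe⟩, ?_⟩
  rintro ℓ hI rfl ⟨a, b⟩ hab
  have hU : ℓ ∉ s.U ∪ e.U := Set.disjoint_left.1 hdisj hI
  obtain ⟨a', ha'⟩ := LTS.exists_W_projD_of_offered (fun hUs => hU (.inl hUs)) hxs hab.1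
  obtain ⟨b', hb'⟩ := LTS.exists_W_projD_of_offered (fun hUe => hU (.inr hUe)) hxe hab.2
  exact ⟨(a', b'), (h.par_W_singleton_iff hcomp hab hL).2 ⟨ha', hb'⟩⟩

theorem mem_par_offered_iff (hs : Disjoint s.I s.U) (he : Disjoint e.I e.U)
    (hcomp : Composable s e) (h : Compatible s e Xs Xe) :
    x ∈ (par s e).offered (Xs ×ˢ Xe) ↔ JointlyOffered s e Xs Xe x :=
  ⟨h.jointlyOffered_of_mem_par_offered hs he hcomp,
    h.mem_par_offered_of_jointlyOffered hs he hcomp⟩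

theorem collect_prod (h : Compatible s e Xs Xe) : collect (Xs ×ˢ Xe) = (Xs, Xe) :=
  Prod.ext (Set.fst_image_prod Xs h.nonempty_right) (Set.snd_image_prod h.nonempty_left Xe)

end Compatible

namespace RU

theorem epsClosed (h : RU s e Xs Xe) : s.EpsClosed Xs ∧ e.EpsClosed Xe := by
  induction h with
  | base => exact ⟨s.epsClosed_after [], e.epsClosed_after []⟩
  | internalE ℓ _ _ _ ih => exact ⟨ih.1, e.epsClosed_afterSet _ _⟩
  | internalS ℓ _ _ _ ih => exact ⟨s.epsClosed_afterSet _ _, ih.2⟩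
  | syncOutE | syncOutS | syncIn | qdelta =>
    exact ⟨s.epsClosed_afterSet _ _, e.epsClosed_afterSet _ _⟩

theorem mem_of_isEcosim {R : Set (Set Qs × Set Qe)} (hR : IsEcosim s e R) (h : RU s e Xs Xe) :
    (Xs, Xe) ∈ R := by
  induction h with
  | base => exact hR.1
  | syncOutE ℓ _ hout hI ih => exact ((hR.2 _ _ ih).1 ℓ hout hI).2
  | syncOutS ℓ _ hout hI ih => exact ((hR.2 _ _ ih).2.1 ℓ hout hI).2
  | internalE ℓ _ hoff hL ih => exact (hR.2 _ _ ih).2.2.1 ℓ hoff hL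
  | internalS ℓ _ hoff hL ih => exact (hR.2 _ _ ih).2.2.2.1 ℓ hoff hL
  | syncIn ℓ _ hins hine ih => exact (hR.2 _ _ ih).2.2.2.2.1 ℓ hins hine
  | qdelta _ hδs hδe ih => exact (hR.2 _ _ ih).2.2.2.2.2 hδs hδe

theorem accepts_left (heco : Eco s e) (h : RU s e Xs Xe) (hI : ℓ ∈ s.I)
    (hout : .lab ℓ ∈ e.outSet Xe) : ℓ ∈ s.inSet Xs :=
  let ⟨_, hR⟩ := heco
  ((hR.2 _ _ (h.mem_of_isEcosim hR)).1 ℓ hout hI).1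

theorem accepts_right (heco : Eco s e) (h : RU s e Xs Xe) (hI : ℓ ∈ e.I)
    (hout : .lab ℓ ∈ s.outSet Xs) : ℓ ∈ e.inSet Xe :=
  let ⟨_, hR⟩ := heco
  ((hR.2 _ _ (h.mem_of_isEcosim hR)).2.1 ℓ hout hI).1

-- Nonemptiness matters because `in(∅)` is the set of all labels.
theorem nonempty (heco : Eco s e) (h : RU s e Xs Xe) : Xs.Nonempty ∧ Xe.Nonempty := by
  induction h with
  | base => exact ⟨⟨s.q0, .nil .refl⟩, ⟨e.q0, .nil .refl⟩⟩
  | syncOutE ℓ h hout hI ih =>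
    exact ⟨LTS.afterSet_nonempty_of_mem_inSet ih.1 (h.accepts_left heco hI hout),
      LTS.afterSet_nonempty_of_mem_outSet hout⟩
  | syncOutS ℓ h hout hI ih =>
    exact ⟨LTS.afterSet_nonempty_of_mem_outSet hout,
      LTS.afterSet_nonempty_of_mem_inSet ih.2 (h.accepts_right heco hI hout)⟩
  | internalE ℓ _ hoff _ ih =>
    exact ⟨ih.1, LTS.afterSet_nonempty_of_mem_offered ih.2 (LTS.lab_mem_offered_iff.2 hoff)⟩
  | internalS ℓ _ hoff _ ih =>
    exact ⟨LTS.afterSet_nonempty_of_mem_offered ih.1 (LTS.lab_mem_offered_iff.2 hoff), ih.2⟩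
  | syncIn ℓ _ hins hine ih =>
    exact ⟨LTS.afterSet_nonempty_of_mem_inSet ih.1 hins,
      LTS.afterSet_nonempty_of_mem_inSet ih.2 hine⟩
  | qdelta _ hδs hδe _ =>
    exact ⟨LTS.afterSet_nonempty_of_mem_outSet hδs, LTS.afterSet_nonempty_of_mem_outSet hδe⟩

theorem compatible (heco : Eco s e) (h : RU s e Xs Xe) : Compatible s e Xs Xe where
  nonempty_left := (h.nonempty heco).1
  nonempty_right := (h.nonempty heco).2
  epsClosed_left := h.epsClosed.1
  epsClosed_right := h.epsClosed.2
  accepts_left _ hI hout := h.accepts_left heco hI hout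
  accepts_right _ hI hout := h.accepts_right heco hI hout

theorem sync_of_mem_offered (hcomp : Composable s e) (h : RU s e Xs Xe) (hLs : ELabel.inL s.L x)
    (hLe : ELabel.inL e.L x) (hs : x ∈ s.offered Xs) (he : x ∈ e.offered Xe) :
    RU s e (s.afterSet Xs [x]) (e.afterSet Xe [x]) := by
  cases x with
  | delta => exact .qdelta h (LTS.delta_mem_offered_iff.1 hs) (LTS.delta_mem_offered_iff.1 he)
  | lab ℓ =>
    rcases LTS.lab_mem_offered_iff.1 hs with houts | hins
    · exact .syncOutS ℓ h houts (hcomp.mem_I_of_mem_U (LTS.mem_U_of_lab_mem_outSet houts) hLe)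
    rcases LTS.lab_mem_offered_iff.1 he with houte | hine
    · exact .syncOutE ℓ h houte
        (hcomp.symm.mem_I_of_mem_U (LTS.mem_U_of_lab_mem_outSet houte) hLs)
    · exact .syncIn ℓ h hins hine

theorem step (hcomp : Composable s e) (h : RU s e Xs Xe) (hx : JointlyOffered s e Xs Xe x) :
    RU s e (s.afterSet Xs (projD [x] s.L)) (e.afterSet Xe (projD [x] e.L)) := by
  obtain ⟨hL, hxs, hxe⟩ := hx
  by_cases hLs : ELabel.inL s.L x <;> by_cases hLe : ELabel.inL e.L x
  · rw [projD_singleton_of_inL hLs, projD_singleton_of_inL hLe]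
    exact h.sync_of_mem_offered hcomp hLs hLe (hxs hLs) (hxe hLe)
  all_goals cases x with
    | delta => simp [ELabel.inL] at hLs hLe
    | lab ℓ => ?_
  · rw [projD_singleton_of_inL hLs, projD_singleton_of_not_inL hLe, h.epsClosed.2.afterSet_nil]
    exact h.internalS ℓ (LTS.lab_mem_offered_iff.1 (hxs hLs)) hLe
  · rw [projD_singleton_of_not_inL hLs, projD_singleton_of_inL hLe, h.epsClosed.1.afterSet_nil]
    exact h.internalE ℓ (LTS.lab_mem_offered_iff.1 (hxe hLe)) hLs
  · exact absurd hL (not_or_intro hLs hLe)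

theorem jointlyOffered_induction (heco : Eco s e) {motive : Set Qs → Set Qe → Prop}
    (base : motive (s.after []) (e.after []))
    (step : ∀ {Xs Xe x}, RU s e Xs Xe → JointlyOffered s e Xs Xe x → motive Xs Xe →
      motive (s.afterSet Xs (projD [x] s.L)) (e.afterSet Xe (projD [x] e.L)))
    (h : RU s e Xs Xe) : motive Xs Xe := by
  have sync {Xs Xe x} (h : RU s e Xs Xe) (hs : x ∈ s.offered Xs) (he : x ∈ e.offered Xe)
      (ih : motive Xs Xe) : motive (s.afterSet Xs [x]) (e.afterSet Xe [x]) := by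
    have hLs := LTS.inL_of_mem_offered (h.nonempty heco).1 hs
    have hLe := LTS.inL_of_mem_offered (h.nonempty heco).2 he
    simpa only [projD_singleton_of_inL hLs, projD_singleton_of_inL hLe] using
      step h ⟨ELabel.inL_union_left hLs, fun _ => hs, fun _ => he⟩ ih
  induction h with
  | base => exact base
  | syncOutE ℓ h hout hI ih =>
    exact sync h (LTS.lab_mem_offered_iff.2 (.inr (h.accepts_left heco hI hout))) (.inl hout) ih
  | syncOutS ℓ h hout hI ih =>
    exact sync h (.inl hout) (LTS.lab_mem_offered_iff.2 (.inr (h.accepts_right heco hI hout))) ih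
  | syncIn ℓ h hins hine ih => exact sync h (.inr ⟨ℓ, hins, rfl⟩) (.inr ⟨ℓ, hine, rfl⟩) ih
  | qdelta h hδs hδe ih => exact sync h (.inl hδs) (.inl hδe) ih
  | @internalE Xs Xe ℓ h hoff hLs ih =>
    replace hLs : ¬ ELabel.inL s.L (.lab ℓ) := hLs
    rw [← LTS.lab_mem_offered_iff] at hoff
    have hLe := LTS.inL_of_mem_offered (h.nonempty heco).2 hoff
    have hjoint : JointlyOffered s e Xs Xe (.lab ℓ) :=
      ⟨.inr hLe, fun hL => absurd hL hLs, fun _ => hoff⟩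
    simpa only [projD_singleton_of_not_inL hLs, projD_singleton_of_inL hLe,
      h.epsClosed.1.afterSet_nil] using step h hjoint ih
  | @internalS Xs Xe ℓ h hoff hLe ih =>
    replace hLe : ¬ ELabel.inL e.L (.lab ℓ) := hLe
    rw [← LTS.lab_mem_offered_iff] at hoff
    have hLs := LTS.inL_of_mem_offered (h.nonempty heco).1 hoff
    have hjoint : JointlyOffered s e Xs Xe (.lab ℓ) :=
      ⟨.inl hLs, fun _ => hoff, fun hL => absurd hL hLe⟩
    simpa only [projD_singleton_of_inL hLs, projD_singleton_of_not_inL hLe,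
      h.epsClosed.2.afterSet_nil] using step h hjoint ih

theorem exists_utrace (hs : Disjoint s.I s.U) (he : Disjoint e.I e.U) (hcomp : Composable s e)
    (heco : Eco s e) (h : RU s e Xs Xe) :
    ∃ σ ∈ (par s e).Utraces, (par s e).after σ = Xs ×ˢ Xe := by
  refine jointlyOffered_induction heco
    (motive := fun Xs Xe => ∃ σ ∈ (par s e).Utraces, (par s e).after σ = Xs ×ˢ Xe) ?_ ?_ h
  · exact ⟨[], (par s e).nil_mem_Utraces, par_after_nil s e⟩
  · rintro Xs Xe x h hx ⟨σ, hσ, hafter⟩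
    have hcompat := h.compatible heco
    refine ⟨σ ++ [x], ?_, ?_⟩
    · rw [LTS.append_singleton_mem_Utraces_iff_mem_offered (disjoint_par_I_par_U hs he), hafter,
        hcompat.mem_par_offered_iff hs he hcomp]
      exact ⟨hσ, hx⟩
    · rw [LTS.after_append_singleton, hafter, hcompat.par_afterSet_prod hcomp hx.1]

theorem exists_of_mem_Utraces (hs : Disjoint s.I s.U) (he : Disjoint e.I e.U)
    (hcomp : Composable s e) (heco : Eco s e) {σ : List (ELabel Lab)}
    (hσ : σ ∈ (par s e).Utraces) : ∃ Xs Xe, RU s e Xs Xe ∧ (par s e).after σ = Xs ×ˢ Xe := by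
  induction σ using List.reverseRecOn with
  | nil => exact ⟨_, _, .base, par_after_nil s e⟩
  | append_singleton σ x ih =>
    rw [LTS.append_singleton_mem_Utraces_iff_mem_offered (disjoint_par_I_par_U hs he)] at hσ
    obtain ⟨Xs, Xe, h, hafter⟩ := ih hσ.1
    have hcompat := h.compatible heco
    have hx : JointlyOffered s e Xs Xe x :=
      (hcompat.mem_par_offered_iff hs he hcomp).1 (hafter ▸ hσ.2)
    refine ⟨_, _, h.step hcomp hx, ?_⟩
    rw [LTS.after_append_singleton, hafter, hcompat.par_afterSet_prod hcomp hx.1]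

end RU

theorem RU_iff_collect_utraces_general (hs : Disjoint s.I s.U) (he : Disjoint e.I e.U)
    (hcomp : Composable s e) (heco : Eco s e) (Xs : Set Qs) (Xe : Set Qe) :
    RU s e Xs Xe ↔
      ∃ σ ∈ (par s e).Utraces, collect ((par s e).after σ) = (Xs, Xe) := by
  constructor
  · intro h
    obtain ⟨σ, hσ, hafter⟩ := h.exists_utrace hs he hcomp heco
    exact ⟨σ, hσ, by rw [hafter, (h.compatible heco).collect_prod]⟩
  · rintro ⟨σ, hσ, hcollect⟩
    obtain ⟨Ys, Ye, h, hafter⟩ := RU.exists_of_mem_Utraces hs he hcomp heco hσ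
    rw [hafter, (h.compatible heco).collect_prod] at hcollect
    obtain ⟨rfl, rfl⟩ := Prod.mk.inj hcollect
    exact h

end Par

/-- for composable `s`, `e` with `s eco e`:
`(X_s, X_e) ∈ R_U(s,e)` iff `⟨s ∥ e after σ⟩ = (X_s, X_e)` for some utrace
`σ` of `s ∥ e`. -/
theorem RU_iff_collect_utraces {Qs Qe Lab : Type}
    (s : LTS Qs Lab) (e : LTS Qe Lab)
    (hs : s.WellFormed) (he : e.WellFormed)
    (hcomp : Composable s e) (heco : Eco s e)
    (Xs : Set Qs) (Xe : Set Qe) :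
    RU s e Xs Xe ↔
      ∃ σ ∈ (par s e).Utraces, collect ((par s e).after σ) = (Xs, Xe) := by
  exact RU_iff_collect_utraces_general hs.2.2.1 he.2.2.1 hcomp heco Xs Xe
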